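/- arXiv:2602.05647 — 2 statements merged into one kernel-verified Lean document; each statement's English description precedes it below -/
import Mathlib

section
/- Let τ₁,…,τ_p be positive integers with dilations E_λ on ℝᵖ, homogeneous norm ρ_E and E-weights H_E. There exists a sequence of smooth compactly supported functions θ_j : ℝᵖ → ℝ (j ∈ ℕ) such that: (i) 0 ≤ θ_j ≤ 1 on ℝᵖ for every j; (ii) the sets Ω_j = {ξ ∈ ℝᵖ : θ_j(ξ) = 1} satisfy Ω_j ⋐ Ω_{j+1} (Ω_j is compactly contained in the interior of Ω_{j+1}) and ⋃_{j} Ω_j = ℝᵖ; (iii) for every multi-index β ∈ ℕᵖ with β ≠ 0, every compact set K ⊆ ℝⁿ, and every function of the form r(x,ξ) = Σ_{γ : H_E(γ) ≤ H_E(β)−1} c_γ(x) ξ^γ with finitely many continuous coefficient functions c_γ : ℝⁿ → ℝ, there exists a constant C > 0 such that |r(x,ξ) · ∂_ξ^β θ_j(ξ)| ≤ C for every j ∈ ℕ, every x ∈ K and every ξ ∈ ℝᵖ. -/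
noncomputable section

/-- The partial derivative `∂/∂ξ_l` on functions `ℝᵖ → ℝ`. -/
def pdE (p : ℕ) (l : Fin p) (f : (Fin p → ℝ) → ℝ) : (Fin p → ℝ) → ℝ :=
  fun ξ => fderiv ℝ f ξ (Pi.single l 1)

/-- The iterated partial derivative `∂_ξ^β` on functions `ℝᵖ → ℝ`, for a
multi-index `β ∈ ℕᵖ`. -/
def pdEPow (p : ℕ) (β : Fin p → ℕ) (f : (Fin p → ℝ) → ℝ) : (Fin p → ℝ) → ℝ :=
  ((List.ofFn fun l : Fin p => (pdE p l)^[β l]).foldr (· ∘ ·) id) f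

/-!
Take `θ_j = φ ∘ E_{q^j}`, where `φ` is a bump function at the origin and `q < 1` is the ratio of its
inner and outer radius. Since `‖E_μ ξ‖ ≤ μ ‖ξ‖` for `0 ≤ μ ≤ 1`, the dilation `E_q` moves the open
ball where `φ ≠ 0` into a ball where `φ = 1`, so the sets `{θ_j = 1}` are nested, and they exhaust
the space because `q^j → 0`. The operator `∂^β` is homogeneous of degree `H_E(β)` and the monomial
`ξ^γ` of degree `H_E(γ)`, hence, with `η = E_μ ξ`,
`ξ^γ ∂^β(φ ∘ E_μ)(ξ) = μ^(H_E(β) - H_E(γ)) η^γ (∂^β φ)(η)`.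
For `H_E(γ) ≤ H_E(β)` and `μ ≤ 1` this is bounded by the maximum of the fixed compactly supported
function `|η^γ (∂^β φ)(η)|`.
-/

open scoped ContDiff

section Dilation

variable {ι : Type*} (τ : ι → ℕ)

/-- The dilation `E_μ ξ = (μ ^ τ_l * ξ_l)_l` with weights `τ`, as a continuous linear map. Every
real `μ` is allowed, so `E_μ` need not be invertible. -/
def anisotropicDilation (μ : ℝ) : (ι → ℝ) →L[ℝ] (ι → ℝ) :=
  .pi fun l => μ ^ τ l • .proj l

lemma anisotropicDilation_apply (μ : ℝ) (ξ : ι → ℝ) (l : ι) :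
    anisotropicDilation τ μ ξ l = μ ^ τ l * ξ l := rfl

lemma anisotropicDilation_mul_apply (μ ν : ℝ) (ξ : ι → ℝ) :
    anisotropicDilation τ (μ * ν) ξ = anisotropicDilation τ μ (anisotropicDilation τ ν ξ) := by
  ext l
  simp only [anisotropicDilation_apply, mul_pow, mul_assoc]

lemma anisotropicDilation_one_apply (ξ : ι → ℝ) : anisotropicDilation τ 1 ξ = ξ := by
  ext l
  simp only [anisotropicDilation_apply, one_pow, one_mul]

lemma anisotropicDilation_single [DecidableEq ι] (μ : ℝ) (l : ι) :
    anisotropicDilation τ μ (Pi.single l 1) = μ ^ τ l • Pi.single l 1 := by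
  ext k
  rcases eq_or_ne k l with rfl | hkl
  · rfl
  · simp [anisotropicDilation_apply, hkl]

lemma isClosedEmbedding_anisotropicDilation {μ : ℝ} (hμ : μ ≠ 0) :
    Topology.IsClosedEmbedding (anisotropicDilation τ μ) :=
  Function.LeftInverse.isClosedEmbedding (f := anisotropicDilation τ μ⁻¹)
    (fun ξ => by
      rw [← anisotropicDilation_mul_apply, inv_mul_cancel₀ hμ, anisotropicDilation_one_apply])
    (anisotropicDilation τ μ⁻¹).continuous (anisotropicDilation τ μ).continuous

variable [Fintype ι]

variable {τ} in
lemma norm_anisotropicDilation_apply_le (hτ : ∀ l, 0 < τ l) {μ : ℝ} (hμ₀ : 0 ≤ μ) (hμ₁ : μ ≤ 1)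
    (ξ : ι → ℝ) : ‖anisotropicDilation τ μ ξ‖ ≤ μ * ‖ξ‖ := by
  refine (pi_norm_le_iff_of_nonneg (by positivity)).2 fun l => ?_
  rw [anisotropicDilation_apply, norm_mul, norm_pow, Real.norm_of_nonneg hμ₀]
  exact mul_le_mul (pow_le_of_le_one hμ₀ hμ₁ (hτ l).ne') (norm_le_pi_norm ξ l)
    (norm_nonneg _) hμ₀

/-- The `E`-weight `H_E(β) = ∑ l, β_l τ_l` of a multi-index. -/
def anisotropicWeight (β : ι → ℕ) : ℕ := ∑ l, β l * τ l

lemma prod_anisotropicDilation_pow (γ : ι → ℕ) (μ : ℝ) (ξ : ι → ℝ) :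
    ∏ l, anisotropicDilation τ μ ξ l ^ γ l = μ ^ anisotropicWeight τ γ * ∏ l, ξ l ^ γ l := by
  simp only [anisotropicDilation_apply, anisotropicWeight, mul_pow, ← pow_mul, mul_comm (τ _),
    Finset.prod_mul_distrib, Finset.prod_pow_eq_pow_sum]

end Dilation

section HomogeneousOperator

variable {ι : Type*} [Fintype ι] {τ : ι → ℕ}

/-- A local operator on smooth functions, compatible with scalars, which is homogeneous of degree
`d` for the dilations with weights `τ`; the partial derivatives are the motivating examples.
Additivity is left out, as only the scaling behaviour matters here. -/
structure IsHomogeneousOperator (τ : ι → ℕ) (d : ℕ)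
    (D : ((ι → ℝ) → ℝ) → ((ι → ℝ) → ℝ)) : Prop where
  contDiff {f : (ι → ℝ) → ℝ} : ContDiff ℝ ∞ f → ContDiff ℝ ∞ (D f)
  tsupport_subset (f : (ι → ℝ) → ℝ) : tsupport (D f) ⊆ tsupport f
  map_smul (a : ℝ) {f : (ι → ℝ) → ℝ} : ContDiff ℝ ∞ f → D (a • f) = a • D f
  map_comp_dilation (μ : ℝ) {f : (ι → ℝ) → ℝ} : ContDiff ℝ ∞ f →
    D (f ∘ anisotropicDilation τ μ) = μ ^ d • (D f ∘ anisotropicDilation τ μ)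

namespace IsHomogeneousOperator

variable {d d' : ℕ} {D D' : ((ι → ℝ) → ℝ) → ((ι → ℝ) → ℝ)}

protected lemma id : IsHomogeneousOperator τ 0 id where
  contDiff hf := hf
  tsupport_subset _ := subset_rfl
  map_smul _ _ _ := rfl
  map_comp_dilation μ f _ := by rw [pow_zero, one_smul, id, id]

protected lemma comp (hD : IsHomogeneousOperator τ d D) (hD' : IsHomogeneousOperator τ d' D') :
    IsHomogeneousOperator τ (d + d') (D ∘ D') where
  contDiff hf := hD.contDiff (hD'.contDiff hf)
  tsupport_subset f := (hD.tsupport_subset _).trans (hD'.tsupport_subset f)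
  map_smul a f hf := by
    simp only [Function.comp_apply, hD'.map_smul a hf, hD.map_smul a (hD'.contDiff hf)]
  map_comp_dilation μ f hf := by
    have hDf : ContDiff ℝ ∞ (D' f) := hD'.contDiff hf
    simp only [Function.comp_apply, hD'.map_comp_dilation μ hf,
      hD.map_smul _ (hDf.comp (anisotropicDilation τ μ).contDiff), hD.map_comp_dilation μ hDf,
      smul_smul, pow_add, mul_comm]

lemma iterate (hD : IsHomogeneousOperator τ d D) (k : ℕ) :
    IsHomogeneousOperator τ (k * d) D^[k] := by
  induction k with
  | zero => exact (zero_mul d).symm ▸ .id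
  | succ k ih => exact (Nat.succ_mul k d).symm ▸ ih.comp hD

lemma foldr_comp {α : Type*} {d : α → ℕ} {D : α → ((ι → ℝ) → ℝ) → ((ι → ℝ) → ℝ)}
    (hD : ∀ a, IsHomogeneousOperator τ (d a) (D a)) (L : List α) :
    IsHomogeneousOperator τ (L.map d).sum ((L.map D).foldr (· ∘ ·) id) := by
  induction L with
  | nil => exact .id
  | cons a L ih =>
    rw [List.map_cons, List.map_cons, List.sum_cons]
    exact (hD a).comp ih

lemma monomial_mul_map_comp_dilation (hD : IsHomogeneousOperator τ d D) {f : (ι → ℝ) → ℝ}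
    (hf : ContDiff ℝ ∞ f) {γ : ι → ℕ} (hγ : anisotropicWeight τ γ ≤ d) (μ : ℝ) (ξ : ι → ℝ) :
    (∏ l, ξ l ^ γ l) * D (f ∘ anisotropicDilation τ μ) ξ =
      μ ^ (d - anisotropicWeight τ γ) * ((∏ l, anisotropicDilation τ μ ξ l ^ γ l) *
        D f (anisotropicDilation τ μ ξ)) := by
  rw [hD.map_comp_dilation μ hf, prod_anisotropicDilation_pow, Pi.smul_apply, smul_eq_mul,
    Function.comp_apply, ← pow_sub_mul_pow μ hγ]
  ring

lemma exists_bound_monomial_mul (hD : IsHomogeneousOperator τ d D) {f : (ι → ℝ) → ℝ}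
    (hf : ContDiff ℝ ∞ f) (hfs : HasCompactSupport f) {γ : ι → ℕ}
    (hγ : anisotropicWeight τ γ ≤ d) :
    ∃ M, ∀ μ : ℝ, 0 ≤ μ → μ ≤ 1 → ∀ ξ : ι → ℝ,
      |(∏ l, ξ l ^ γ l) * D (f ∘ anisotropicDilation τ μ) ξ| ≤ M := by
  have hcont : Continuous fun η : ι → ℝ => (∏ l, η l ^ γ l) * D f η :=
    .mul (by fun_prop) (hD.contDiff hf).continuous
  have hDfs : HasCompactSupport (D f) :=
    hfs.of_isClosed_subset (isClosed_tsupport _) (hD.tsupport_subset f)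
  obtain ⟨M, hM⟩ := hcont.bounded_above_of_compact_support hDfs.mul_left
  refine ⟨M, fun μ hμ₀ hμ₁ ξ => ?_⟩
  rw [hD.monomial_mul_map_comp_dilation hf hγ, abs_mul, abs_of_nonneg (pow_nonneg hμ₀ _)]
  exact (mul_le_of_le_one_left (abs_nonneg _) (pow_le_one₀ hμ₀ hμ₁)).trans (hM _)

end IsHomogeneousOperator

variable {p : ℕ}

lemma isHomogeneousOperator_pdE (τ : Fin p → ℕ) (l : Fin p) :
    IsHomogeneousOperator τ (τ l) (pdE p l) where
  contDiff hf := (hf.fderiv_right (m := ∞) (by simp)).clm_apply contDiff_const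
  tsupport_subset _ := tsupport_fderiv_apply_subset ℝ _
  map_smul a f _ := by
    ext ξ
    simp [pdE, fderiv_const_smul_field]
  map_comp_dilation μ f hf := by
    ext ξ
    have hdf : DifferentiableAt ℝ f (anisotropicDilation τ μ ξ) :=
      hf.differentiable (by simp) _
    have hfderiv := (hdf.hasFDerivAt.comp ξ (anisotropicDilation τ μ).hasFDerivAt).fderiv
    simp [pdE, hfderiv, anisotropicDilation_single]

lemma isHomogeneousOperator_pdEPow (τ β : Fin p → ℕ) :
    IsHomogeneousOperator τ (anisotropicWeight τ β) (pdEPow p β) := by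
  have h := IsHomogeneousOperator.foldr_comp
    (fun l => (isHomogeneousOperator_pdE τ l).iterate (β l)) (List.finRange p)
  rwa [← List.ofFn_eq_map, ← List.ofFn_eq_map, List.sum_ofFn] at h

end HomogeneousOperator

section BumpRatio

variable {E : Type*} {c : E} (φ : ContDiffBump c)

/-- The dilation factor `q < 1` generating the cutoffs. It is chosen so that scaling
by `q` maps the ball of radius `φ.rOut` onto the ball of radius `φ.rIn`. -/
def bumpRatio : ℝ := φ.rIn / φ.rOut

lemma bumpRatio_pos : 0 < bumpRatio φ := div_pos φ.rIn_pos φ.rOut_pos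

lemma bumpRatio_lt_one : bumpRatio φ < 1 := (div_lt_one φ.rOut_pos).2 φ.rIn_lt_rOut

end BumpRatio

section DilatedBump

variable {ι : Type*} [Fintype ι] (τ : ι → ℕ) (φ : ContDiffBump (0 : ι → ℝ))

/-- The `j`-th cutoff `θ_j = φ ∘ E_{q^j}`, where `q = bumpRatio φ`. -/
def dilatedBump (j : ℕ) : (ι → ℝ) → ℝ :=
  φ ∘ anisotropicDilation τ (bumpRatio φ ^ j)

lemma contDiff_dilatedBump (j : ℕ) : ContDiff ℝ ∞ (dilatedBump τ φ j) :=
  φ.contDiff.comp (anisotropicDilation τ _).contDiff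

lemma hasCompactSupport_dilatedBump (j : ℕ) : HasCompactSupport (dilatedBump τ φ j) :=
  φ.hasCompactSupport.comp_isClosedEmbedding <| isClosedEmbedding_anisotropicDilation τ <|
    pow_ne_zero j (bumpRatio_pos φ).ne'

lemma isCompact_dilatedBump_eq_one (j : ℕ) : IsCompact {ξ | dilatedBump τ φ j ξ = 1} :=
  (hasCompactSupport_dilatedBump τ φ j).isCompact_preimage (contDiff_dilatedBump τ φ j).continuous
    isClosed_singleton (by simp)

lemma norm_lt_rOut_of_dilatedBump_eq_one {j : ℕ} {ξ : ι → ℝ} (hξ : dilatedBump τ φ j ξ = 1) :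
    ‖anisotropicDilation τ (bumpRatio φ ^ j) ξ‖ < φ.rOut := by
  have hmem : anisotropicDilation τ (bumpRatio φ ^ j) ξ ∈ Function.support φ :=
    (hξ.trans_ne one_ne_zero :)
  rwa [φ.support_eq, mem_ball_zero_iff] at hmem

lemma dilatedBump_eq_one_of_norm_le {j : ℕ} {ξ : ι → ℝ}
    (hξ : ‖anisotropicDilation τ (bumpRatio φ ^ j) ξ‖ ≤ φ.rIn) : dilatedBump τ φ j ξ = 1 :=
  φ.one_of_mem_closedBall (mem_closedBall_zero_iff.2 hξ)

variable {τ}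

lemma dilatedBump_eq_one_subset_interior (hτ : ∀ l, 0 < τ l) (j : ℕ) :
    {ξ | dilatedBump τ φ j ξ = 1} ⊆ interior {ξ | dilatedBump τ φ (j + 1) ξ = 1} := by
  intro ξ hξ
  set q := bumpRatio φ
  have hnorm : ‖anisotropicDilation τ (q ^ (j + 1)) ξ‖ < φ.rIn :=
    calc ‖anisotropicDilation τ (q ^ (j + 1)) ξ‖
        = ‖anisotropicDilation τ q (anisotropicDilation τ (q ^ j) ξ)‖ := by
          rw [pow_succ', anisotropicDilation_mul_apply]
      _ ≤ q * ‖anisotropicDilation τ (q ^ j) ξ‖ :=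
          norm_anisotropicDilation_apply_le hτ (bumpRatio_pos φ).le (bumpRatio_lt_one φ).le _
      _ < q * φ.rOut :=
          mul_lt_mul_of_pos_left (norm_lt_rOut_of_dilatedBump_eq_one τ φ hξ) (bumpRatio_pos φ)
      _ = φ.rIn := div_mul_cancel₀ _ φ.rOut_pos.ne'
  have hopen : IsOpen {ζ | ‖anisotropicDilation τ (q ^ (j + 1)) ζ‖ < φ.rIn} :=
    isOpen_lt (anisotropicDilation τ _).continuous.norm continuous_const
  exact mem_interior.2
    ⟨_, fun ζ hζ => dilatedBump_eq_one_of_norm_le τ φ (le_of_lt hζ), hopen, hnorm⟩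

lemma iUnion_dilatedBump_eq_one (hτ : ∀ l, 0 < τ l) :
    ⋃ j, {ξ | dilatedBump τ φ j ξ = 1} = Set.univ := by
  refine Set.eq_univ_of_forall fun ξ => Set.mem_iUnion.2 ?_
  have hlim : Filter.Tendsto (fun j => bumpRatio φ ^ j * ‖ξ‖) Filter.atTop (nhds (0 * ‖ξ‖)) :=
    (tendsto_pow_atTop_nhds_zero_of_lt_one (bumpRatio_pos φ).le (bumpRatio_lt_one φ)).mul_const _
  rw [zero_mul] at hlim
  obtain ⟨j, hj⟩ := (hlim.eventually_le_const φ.rIn_pos).exists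
  exact ⟨j, dilatedBump_eq_one_of_norm_le τ φ <|
    (norm_anisotropicDilation_apply_le hτ (pow_nonneg (bumpRatio_pos φ).le j)
      (pow_le_one₀ (bumpRatio_pos φ).le (bumpRatio_lt_one φ).le) ξ).trans hj⟩

variable (τ) in
lemma exists_bound_monomial_mul_dilatedBump {d : ℕ} {D : ((ι → ℝ) → ℝ) → ((ι → ℝ) → ℝ)}
    (hD : IsHomogeneousOperator τ d D) {γ : ι → ℕ} (hγ : anisotropicWeight τ γ ≤ d) :
    ∃ M, ∀ y : ℕ × (ι → ℝ), |(∏ l, y.2 l ^ γ l) * D (dilatedBump τ φ y.1) y.2| ≤ M := by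
  obtain ⟨M, hM⟩ := hD.exists_bound_monomial_mul φ.contDiff φ.hasCompactSupport hγ
  exact ⟨M, fun y => hM _ (pow_nonneg (bumpRatio_pos φ).le y.1)
    (pow_le_one₀ (bumpRatio_pos φ).le (bumpRatio_lt_one φ).le) y.2⟩

end DilatedBump

lemma exists_bound_sum_mul {α X Y : Type*} [TopologicalSpace X] {K : Set X} (hK : IsCompact K)
    (T : Finset α) {c : α → X → ℝ} (hc : ∀ a ∈ T, ContinuousOn (c a) K) {g : α → Y → ℝ}
    (hg : ∀ a ∈ T, ∃ M, ∀ y, |g a y| ≤ M) :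
    ∃ C : ℝ, 0 < C ∧ ∀ x ∈ K, ∀ y, |∑ a ∈ T, c a x * g a y| ≤ C := by
  choose! A hA using fun a ha => hK.exists_bound_of_continuousOn (hc a ha)
  choose! M hM using hg
  refine ⟨max 1 (∑ a ∈ T, A a * M a), by positivity, fun x hx y => le_max_of_le_right ?_⟩
  calc |∑ a ∈ T, c a x * g a y| ≤ ∑ a ∈ T, |c a x * g a y| := Finset.abs_sum_le_sum_abs _ _
    _ = ∑ a ∈ T, |c a x| * |g a y| := by simp only [abs_mul]
    _ ≤ ∑ a ∈ T, A a * M a := Finset.sum_le_sum fun a ha =>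
        mul_le_mul (hA a ha x hx) (hM a ha y) (abs_nonneg _) ((abs_nonneg _).trans (hA a ha x hx))

theorem stmt_1_general (p : ℕ) (τ : Fin p → ℕ) (hτ : ∀ l, 0 < τ l) :
    ∃ θ : ℕ → (Fin p → ℝ) → ℝ,
      (∀ j, ContDiff ℝ ∞ (θ j) ∧ HasCompactSupport (θ j)) ∧
      (∀ j ξ, 0 ≤ θ j ξ ∧ θ j ξ ≤ 1) ∧
      (∀ j, IsCompact (closure {ξ | θ j ξ = 1}) ∧
        closure {ξ | θ j ξ = 1} ⊆ interior {ξ | θ (j + 1) ξ = 1}) ∧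
      (⋃ j, {ξ | θ j ξ = 1}) = Set.univ ∧
      (∀ (β : Fin p → ℕ) {X : Type*} [TopologicalSpace X] {K : Set X}, IsCompact K →
        ∀ T : Finset (Fin p → ℕ),
        (∀ γ ∈ T, anisotropicWeight τ γ ≤ anisotropicWeight τ β) →
        ∀ c : (Fin p → ℕ) → X → ℝ, (∀ γ ∈ T, ContinuousOn (c γ) K) →
        ∃ C : ℝ, 0 < C ∧ ∀ (j : ℕ), ∀ x ∈ K, ∀ ξ : Fin p → ℝ,
          |(∑ γ ∈ T, c γ x * ∏ l, ξ l ^ γ l) * pdEPow p β (θ j) ξ| ≤ C) := by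
  let φ : ContDiffBump (0 : Fin p → ℝ) := default
  refine ⟨dilatedBump τ φ,
    fun j => ⟨contDiff_dilatedBump τ φ j, hasCompactSupport_dilatedBump τ φ j⟩,
    fun j ξ => ⟨φ.nonneg, φ.le_one⟩, fun j => ?_, iUnion_dilatedBump_eq_one φ hτ, ?_⟩
  · rw [(isCompact_dilatedBump_eq_one τ φ j).isClosed.closure_eq]
    exact ⟨isCompact_dilatedBump_eq_one τ φ j, dilatedBump_eq_one_subset_interior φ hτ j⟩
  · intro β X _ K hK T hT c hc
    obtain ⟨C, hC₀, hC⟩ := exists_bound_sum_mul hK T hc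
      (fun γ hγ => exists_bound_monomial_mul_dilatedBump τ φ
        (isHomogeneousOperator_pdEPow τ β) (hT γ hγ))
    refine ⟨C, hC₀, fun j x hx ξ => ?_⟩
    simpa only [Finset.sum_mul, mul_assoc] using hC x hx (j, ξ)

/-- Given positive integers `τ₁,…,τ_p` (with dilations `E_λ`, homogeneous
norm `ρ_E` and `E`-weights `H_E`), there is a sequence `θ_j ∈ C_0^∞(ℝᵖ)` with `0 ≤ θ_j ≤ 1`,
whose level-one sets `Ω_j = {θ_j = 1}` are compactly contained in each other and exhaust
`ℝᵖ`, and such that for every multi-index `β ≠ 0`, every compact `K ⊆ ℝⁿ`, and every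
function `r(x,ξ) = Σ_{H_E(γ) ≤ H_E(β)−1} c_γ(x) ξ^γ` with continuous coefficients, the
quantities `|r(x,ξ) ∂_ξ^β θ_j(ξ)|` are bounded uniformly in `j`, `x ∈ K`, `ξ ∈ ℝᵖ`. -/
theorem stmt_1 (p : ℕ) (hp : 0 < p) (τ : Fin p → ℕ) (hτ : ∀ l, 0 < τ l) :
    ∃ θ : ℕ → (Fin p → ℝ) → ℝ,
      (∀ j, ContDiff ℝ (⊤ : ℕ∞) (θ j) ∧ HasCompactSupport (θ j)) ∧
      (∀ j ξ, 0 ≤ θ j ξ ∧ θ j ξ ≤ 1) ∧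
      (∀ j, IsCompact (closure {ξ | θ j ξ = 1}) ∧
        closure {ξ | θ j ξ = 1} ⊆ interior {ξ | θ (j + 1) ξ = 1}) ∧
      (⋃ j, {ξ | θ j ξ = 1}) = Set.univ ∧
      (∀ β : Fin p → ℕ, β ≠ 0 →
        ∀ (n : ℕ) (K : Set (Fin n → ℝ)), IsCompact K →
        ∀ T : Finset (Fin p → ℕ), (∀ γ ∈ T, (∑ l, γ l * τ l) + 1 ≤ ∑ l, β l * τ l) →
        ∀ c : (Fin p → ℕ) → (Fin n → ℝ) → ℝ, (∀ γ, Continuous (c γ)) →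
        ∃ C : ℝ, 0 < C ∧ ∀ (j : ℕ), ∀ x ∈ K, ∀ ξ : Fin p → ℝ,
          |(∑ γ ∈ T, c γ x * ∏ l, ξ l ^ γ l) * pdEPow p β (θ j) ξ| ≤ C) := by
  obtain ⟨θ, hsmooth, hrange, hnested, hcover, hbound⟩ := stmt_1_general p τ hτ
  exact ⟨θ, hsmooth, hrange, hnested, hcover, fun β _ n K hK T hT c hc =>
    hbound β hK T (fun γ hγ => (Nat.le_succ _).trans (hT γ hγ)) c fun γ _ => (hc γ).continuousOn⟩

end
end

section
/- Let σ₁,…,σₙ be positive integers with anisotropic dilations δ_λ on ℝⁿ, and let d be a nonnegative integer. If f : ℝⁿ → ℝ is smooth (C^∞) and f(δ_λ(x)) = λ^d f(x) for every λ > 0 and every x ∈ ℝⁿ, then f is a polynomial function; more precisely, there exists a real multivariate polynomial P in n variables, every monomial x^γ of which (appearing with nonzero coefficient) satisfies Σ_{i=1}^n γ_i σ_i = d, such that f(x) = P(x) for all x ∈ ℝⁿ. -/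
/-!
If `f` is homogeneous of degree `d` for the dilations with weights `σ`, then `∂ᵢf` is homogeneous
of degree `d - σ i`, and Euler's identity `d f = ∑ᵢ σᵢ xᵢ ∂ᵢf` recovers `f` from its partial
derivatives as long as `d ≠ 0`. Each differentiation lowers the degree by at least `min σ`, so the
degree eventually becomes nonpositive; since every dilation orbit tends to the origin as `t → 0⁺`, a
continuous function of degree zero is constant and one of negative degree vanishes.
-/

open Filter
open scoped Topology

variable {ι : Type*} {σ : ι → ℝ} {d : ℝ} {f : (ι → ℝ) → ℝ}

/-- The anisotropic dilation `δ_t` with real weights `σ`, as a continuous linear map. Only `t > 0`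
is meaningful, because of the conventions of `Real.rpow` at negative bases. -/
noncomputable def dilation (σ : ι → ℝ) (t : ℝ) : (ι → ℝ) →L[ℝ] (ι → ℝ) :=
  .pi fun i => t ^ σ i • .proj i

lemma dilation_apply (t : ℝ) (x : ι → ℝ) : dilation σ t x = fun i => t ^ σ i * x i := rfl

lemma dilation_single [DecidableEq ι] (t : ℝ) (i : ι) :
    dilation σ t (Pi.single i 1) = t ^ σ i • Pi.single i 1 := by
  ext j
  obtain rfl | hij := eq_or_ne j i
  · simp [dilation_apply]
  · simp [dilation_apply, hij]

lemma tendsto_dilation_nhdsGT_zero (hσ : ∀ i, 0 < σ i) (x : ι → ℝ) :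
    Tendsto (fun t => dilation σ t x) (𝓝[>] 0) (𝓝 0) := by
  refine (tendsto_pi_nhds.2 fun i => ?_).mono_left nhdsWithin_le_nhds
  have hpow := (Real.continuousAt_rpow_const 0 (σ i) (.inr (hσ i).le)).tendsto
  simpa [dilation_apply, Real.zero_rpow (hσ i).ne'] using hpow.mul_const (x i)

lemma hasDerivAt_dilation_one [Finite ι] (x : ι → ℝ) :
    HasDerivAt (fun t => dilation σ t x) (fun i => σ i * x i) 1 := by
  have := Fintype.ofFinite ι
  refine hasDerivAt_pi.2 fun i => ?_
  simpa [dilation_apply] using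
    (Real.hasDerivAt_rpow_const (p := σ i) (.inl one_ne_zero)).mul_const (x i)

/-- Homogeneity of real degree `d` with respect to the anisotropic dilations with weights `σ`. -/
def IsDilationHomogeneous (σ : ι → ℝ) (d : ℝ) (f : (ι → ℝ) → ℝ) : Prop :=
  ∀ t : ℝ, 0 < t → ∀ x, f (dilation σ t x) = t ^ d * f x

namespace IsDilationHomogeneous

lemma eq_rpow_neg_mul (hom : IsDilationHomogeneous σ d f) {t : ℝ} (ht : 0 < t) (x : ι → ℝ) :
    f x = t ^ (-d) * f (dilation σ t x) := by
  rw [hom t ht, ← mul_assoc, ← Real.rpow_add ht, neg_add_cancel, Real.rpow_zero, one_mul]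

lemma eq_of_tendsto_rpow_neg (hom : IsDilationHomogeneous σ d f) (hσ : ∀ i, 0 < σ i)
    (hf : ContinuousAt f 0) {c : ℝ} (hc : Tendsto (fun t : ℝ => t ^ (-d)) (𝓝[>] 0) (𝓝 c))
    (x : ι → ℝ) : f x = c * f 0 := by
  refine tendsto_nhds_unique (tendsto_const_nhds.congr' ?_)
    (hc.mul (hf.tendsto.comp (tendsto_dilation_nhdsGT_zero hσ x)))
  filter_upwards [self_mem_nhdsWithin] with t ht using hom.eq_rpow_neg_mul ht x

lemma eq_zero_of_neg (hom : IsDilationHomogeneous σ d f) (hσ : ∀ i, 0 < σ i)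
    (hf : ContinuousAt f 0) (hd : d < 0) (x : ι → ℝ) : f x = 0 := by
  have hpow := (Real.continuousAt_rpow_const 0 (-d) (.inr (neg_pos.2 hd).le)).tendsto
  rw [Real.zero_rpow (neg_pos.2 hd).ne'] at hpow
  simpa using hom.eq_of_tendsto_rpow_neg hσ hf (hpow.mono_left nhdsWithin_le_nhds) x

lemma eq_apply_zero (hom : IsDilationHomogeneous σ 0 f) (hσ : ∀ i, 0 < σ i)
    (hf : ContinuousAt f 0) (x : ι → ℝ) : f x = f 0 := by
  simpa using hom.eq_of_tendsto_rpow_neg hσ hf (c := 1) (by simp) x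

lemma contDiff_of_contDiffAt_zero [Fintype ι] (hom : IsDilationHomogeneous σ d f)
    (hσ : ∀ i, 0 < σ i) {k : ℕ} (hf : ContDiffAt ℝ k f 0) : ContDiff ℝ k f := by
  refine contDiff_iff_contDiffAt.2 fun x => ?_
  obtain ⟨t, hft, ht⟩ := (((tendsto_dilation_nhdsGT_zero hσ x).eventually
    (hf.eventually (by simp))).and self_mem_nhdsWithin).exists
  rw [funext (hom.eq_rpow_neg_mul ht)]
  exact contDiffAt_const.mul (hft.comp x (dilation σ t).contDiff.contDiffAt)

lemma fderiv_apply_single [Finite ι] [DecidableEq ι] (hom : IsDilationHomogeneous σ d f)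
    (hf : Differentiable ℝ f) (i : ι) :
    IsDilationHomogeneous σ (d - σ i) fun x => fderiv ℝ f x (Pi.single i 1) := by
  have := Fintype.ofFinite ι
  intro t ht x
  have hcomp : HasFDerivAt (fun y => f (dilation σ t y))
      ((fderiv ℝ f (dilation σ t x)).comp (dilation σ t)) x :=
    (hf _).hasFDerivAt.comp x (dilation σ t).hasFDerivAt
  have hmul : HasFDerivAt (fun y => f (dilation σ t y)) (t ^ d • fderiv ℝ f x) x := by
    simpa only [hom t ht] using (hf x).hasFDerivAt.const_mul (t ^ d)
  have hchain : t ^ σ i * fderiv ℝ f (dilation σ t x) (Pi.single i 1) =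
      t ^ d * fderiv ℝ f x (Pi.single i 1) := by
    simpa [dilation_single] using DFunLike.congr_fun (hcomp.unique hmul) (Pi.single i 1)
  have hpos : 0 < t ^ σ i := Real.rpow_pos_of_pos ht _
  rw [Real.rpow_sub ht, div_mul_eq_mul_div, eq_div_iff hpos.ne', mul_comm, hchain]

theorem sum_mul_fderiv_eq [Fintype ι] [DecidableEq ι] (hom : IsDilationHomogeneous σ d f)
    {x : ι → ℝ} (hf : DifferentiableAt ℝ f x) :
    ∑ i, σ i * x i * fderiv ℝ f x (Pi.single i 1) = d * f x := by
  have hx : dilation σ 1 x = x := by simp [dilation_apply]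
  have hchain : HasDerivAt (fun t => f (dilation σ t x)) (fderiv ℝ f x fun i => σ i * x i) 1 :=
    HasFDerivAt.comp_hasDerivAt (1 : ℝ) (by simpa only [hx] using hf.hasFDerivAt)
      (hasDerivAt_dilation_one x)
  have hpow : HasDerivAt (fun t : ℝ => t ^ d * f x) (d * f x) 1 := by
    simpa using (Real.hasDerivAt_rpow_const (p := d) (.inl one_ne_zero)).mul_const (f x)
  have heq : (fun t => f (dilation σ t x)) =ᶠ[𝓝 1] fun t => t ^ d * f x := by
    filter_upwards [lt_mem_nhds one_pos] with t ht using hom t ht x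
  rw [← hchain.unique (hpow.congr_of_eventuallyEq heq), pi_eq_sum_univ' fun i => σ i * x i]
  simp only [map_sum, map_smul, smul_eq_mul]

lemma exists_isWeightedHomogeneous_of_fderiv [Finite ι] [DecidableEq ι]
    (hom : IsDilationHomogeneous σ d f) (hf : Differentiable ℝ f) (hd : d ≠ 0)
    {Q : ι → MvPolynomial ι ℝ} (hQ : ∀ i, (Q i).IsWeightedHomogeneous σ (d - σ i))
    (hfQ : ∀ i x, fderiv ℝ f x (Pi.single i 1) = MvPolynomial.eval x (Q i)) :
    ∃ P : MvPolynomial ι ℝ, P.IsWeightedHomogeneous σ d ∧ ∀ x, f x = MvPolynomial.eval x P := by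
  have := Fintype.ofFinite ι
  have hXQ i : (MvPolynomial.X i * Q i).IsWeightedHomogeneous σ d := by
    simpa only [add_sub_cancel] using (MvPolynomial.isWeightedHomogeneous_X ℝ σ i).mul (hQ i)
  have hsum : (∑ i, MvPolynomial.C (σ i) * (MvPolynomial.X i * Q i)).IsWeightedHomogeneous σ d :=
    MvPolynomial.IsWeightedHomogeneous.sum _ _ _ fun i _ => (hXQ i).C_mul (σ i)
  refine ⟨_, hsum.C_mul d⁻¹, fun x => ?_⟩
  rw [← inv_mul_cancel_left₀ hd (f x), ← hom.sum_mul_fderiv_eq (hf x)]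
  simp only [hfQ, map_mul, map_sum, MvPolynomial.eval_C, MvPolynomial.eval_X, mul_assoc]

theorem exists_isWeightedHomogeneous [Fintype ι] {m : ℝ} (hm : 0 < m) (hσ : ∀ i, m ≤ σ i)
    {k : ℕ} (hdk : d ≤ k * m) (hf : ContDiff ℝ k f) (hom : IsDilationHomogeneous σ d f) :
    ∃ P : MvPolynomial ι ℝ, P.IsWeightedHomogeneous σ d ∧ ∀ x, f x = MvPolynomial.eval x P := by
  classical
  have hσ_pos i : 0 < σ i := hm.trans_le (hσ i)
  induction k generalizing d f with
  | zero =>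
    have hd : d ≤ 0 := by simpa using hdk
    have hf₀ : ContinuousAt f 0 := hf.continuous.continuousAt
    obtain hneg | rfl := hd.lt_or_eq
    · exact ⟨0, MvPolynomial.isWeightedHomogeneous_zero ℝ σ d,
        by simpa using hom.eq_zero_of_neg hσ_pos hf₀ hneg⟩
    · exact ⟨.C (f 0), MvPolynomial.isWeightedHomogeneous_C σ (f 0),
        by simpa using hom.eq_apply_zero hσ_pos hf₀⟩
  | succ k ih =>
    obtain hd | hd := le_or_gt d (k * m)
    · exact ih hd (hf.of_le (by norm_cast; omega)) hom
    have hd₀ : 0 < d := hd.trans_le' (by positivity)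
    have hdiff : Differentiable ℝ f := hf.differentiable (by simp)
    have hpartial i : ∃ Q : MvPolynomial ι ℝ, Q.IsWeightedHomogeneous σ (d - σ i) ∧
        ∀ x, fderiv ℝ f x (Pi.single i 1) = MvPolynomial.eval x Q := by
      refine ih ?_ ((hf.fderiv_right (by simp)).clm_apply contDiff_const)
        (hom.fderiv_apply_single hdiff i)
      push_cast at hdk
      linarith [hσ i]
    choose Q hQ hfQ using hpartial
    exact hom.exists_isWeightedHomogeneous_of_fderiv hdiff hd₀.ne' hQ hfQ

end IsDilationHomogeneous

/-- The bound `d ≤ k * m` on the degree is sharp: if `k * m < d < (k + 1) * m`, the function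
`x ↦ (max x 0) ^ (d / m)` on the line is `C^k` and homogeneous of degree `d` for the weight `m`,
but not a polynomial. -/
theorem stmt_10_general [Fintype ι] {m : ℝ} (hm : 0 < m) (hσ : ∀ i, m ≤ σ i) {k : ℕ}
    (hdk : d ≤ k * m) (hf : ContDiffAt ℝ k f 0) (hom : IsDilationHomogeneous σ d f) :
    ∃ P : MvPolynomial ι ℝ,
      (∀ γ ∈ P.support, ∑ i, γ i * σ i = d) ∧ ∀ x, f x = MvPolynomial.eval x P := by
  have hf' := hom.contDiff_of_contDiffAt_zero (fun i => hm.trans_le (hσ i)) hf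
  obtain ⟨P, hP, hfP⟩ := hom.exists_isWeightedHomogeneous hm hσ hdk hf'
  refine ⟨P, fun γ hγ => ?_, hfP⟩
  simpa [Finsupp.weight_apply, Finsupp.sum_fintype] using hP (MvPolynomial.mem_support_iff.1 hγ)

/-- A smooth function `f : ℝⁿ → ℝ` that is `δ_λ`-homogeneous of
nonnegative integer degree `d` is a polynomial function; more precisely it is the
evaluation of a real polynomial all of whose monomials `x^γ` have `δ`-weight
`Σ_i γ_i σ_i = d`. -/
theorem stmt_10 (n : ℕ) (σ : Fin n → ℕ) (hσ : ∀ i, 0 < σ i)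
    (f : (Fin n → ℝ) → ℝ) (hf : ContDiff ℝ (⊤ : ℕ∞) f)
    (d : ℕ)
    (hom : ∀ lam : ℝ, 0 < lam → ∀ x : Fin n → ℝ,
      f (fun i => lam ^ (σ i) * x i) = lam ^ d * f x) :
    ∃ P : MvPolynomial (Fin n) ℝ,
      (∀ γ ∈ P.support, ∑ i, γ i * σ i = d) ∧
      ∀ x, f x = MvPolynomial.eval x P := by
  have hom' : IsDilationHomogeneous (fun i => (σ i : ℝ)) d f := fun t ht x => by
    simpa [dilation_apply] using hom t ht x
  exact_mod_cast stmt_10_general one_pos (fun i => Nat.one_le_cast.2 (hσ i)) (mul_one (d : ℝ)).ge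
    (hf.of_le (mod_cast le_top)).contDiffAt hom'
end
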